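/- Let δ>0 and let 0<s<r<1. Then ∫₀^∞ ∫₀^∞ a·b · p^δ_s(0,a) · p^δ_{r−s}(a,b) · (1−r)^{−δ/2} exp(−b²/(2(1−r))) da db = 2·(Γ((δ+1)/2)²/Γ(δ/2)²) · (r−s)^{δ/2+1} (s(1−r))^{1/2} (r(1−s))^{−(δ+1)/2} · ₂F₁((δ+1)/2,(δ+1)/2,δ/2, s(1−r)/(r(1−s))). (The left-hand side is the second moment E^δ[X_s X_r] of a δ-dimensional Bessel bridge from 0 to 0 over [0,1].) -/

import Mathlib

open MeasureTheory Real Filter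

/-- Ascending Pochhammer symbol `(a)_k = a(a+1)⋯(a+k-1)`. -/
noncomputable def poch (a : ℝ) (k : ℕ) : ℝ := ∏ i ∈ Finset.range k, (a + i)

/-- Gauss hypergeometric function `₂F₁(a,b,c,z) = ∑ (a)_k (b)_k / (k! (c)_k) z^k`. -/
noncomputable def hyp2F1 (a b c z : ℝ) : ℝ :=
  ∑' k : ℕ, (poch a k * poch b k) / ((Nat.factorial k : ℝ) * poch c k) * z ^ k

/-- `K(δ) = 2 Γ((δ+1)/2)² / Γ(δ/2)²`. -/
noncomputable def Kcoef (δ : ℝ) : ℝ :=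
  2 * Real.Gamma ((δ + 1) / 2) ^ 2 / Real.Gamma (δ / 2) ^ 2

/-- Two-point kernel `G_δ(s,r)`, equal to the second moment `E^δ[X_s X_r]` of a
δ-dimensional Bessel bridge from 0 to 0 over [0,1]. -/
noncomputable def twoPt (δ s r : ℝ) : ℝ :=
  if s < r then
    Kcoef δ * (r - s) ^ (δ / 2 + 1) * (s * (1 - r)) ^ ((1 : ℝ) / 2) *
      (r * (1 - s)) ^ (-((δ + 1) / 2)) *
      hyp2F1 ((δ + 1) / 2) ((δ + 1) / 2) (δ / 2) (s * (1 - r) / (r * (1 - s)))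
  else
    Kcoef δ * (s - r) ^ (δ / 2 + 1) * (r * (1 - s)) ^ ((1 : ℝ) / 2) *
      (s * (1 - r)) ^ (-((δ + 1) / 2)) *
      hyp2F1 ((δ + 1) / 2) ((δ + 1) / 2) (δ / 2) (r * (1 - s) / (s * (1 - r)))

/-- Coefficient `D(s,r)`. -/
noncomputable def Dcoef (s r : ℝ) : ℝ :=
  if s < r then (1 - s) / ((r - s) * (1 - r)) else s / (r * (s - r))

/-- Coefficient `C_k = Γ(k+(δ+1)/2)/(Γ(δ/2) Γ(k+δ/2) k!)`. -/
noncomputable def Ccoef (δ : ℝ) (k : ℕ) : ℝ :=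
  Real.Gamma ((k : ℝ) + (δ + 1) / 2) /
    (Real.Gamma (δ / 2) * Real.Gamma ((k : ℝ) + δ / 2) * (Nat.factorial k : ℝ))

/-- Coefficient `f_k(s,r)`. -/
noncomputable def fcoef (s r : ℝ) (k : ℕ) : ℝ :=
  if s < r then (2 * (r - s)) ^ ((1 : ℝ) / 2 - (k : ℝ)) * (s / r) ^ ((k : ℝ) + 1 / 2)
  else (2 * (s - r)) ^ ((1 : ℝ) / 2 - (k : ℝ)) * ((1 - s) / (1 - r)) ^ ((k : ℝ) + 1 / 2)

/-- `Σ^δ_{r,s}(b) = Σ^δ_r(X_s | b)`, the density-weighted conditional expectation of a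
δ-dimensional Bessel bridge. -/
noncomputable def SigmaRS (δ r s b : ℝ) : ℝ :=
  ((2 : ℝ) ^ (δ / 2 - 1) * (r * (1 - r)) ^ (δ / 2))⁻¹ *
    Real.exp (-(Dcoef s r) * b ^ 2 / 2) *
    ∑' k : ℕ, Ccoef δ k * fcoef s r k * b ^ (2 * k)

/-- Transition density of the δ-dimensional Bessel process started at 0:
`p^δ_t(0,a) = a^{δ-1}/(2^{δ/2-1} t^{δ/2} Γ(δ/2)) exp(-a²/(2t))`. -/
noncomputable def pFrom0 (δ t a : ℝ) : ℝ :=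
  a ^ (δ - 1) / ((2 : ℝ) ^ (δ / 2 - 1) * t ^ (δ / 2) * Real.Gamma (δ / 2)) *
    Real.exp (-a ^ 2 / (2 * t))

/-- Transition density of the δ-dimensional Bessel process:
`p^δ_t(a,b) = (b/t)(b/a)^{δ/2-1} exp(-(a²+b²)/(2t)) ∑ (ab/(2t))^{2k+δ/2-1}/(k! Γ(k+δ/2))`. -/
noncomputable def pTrans (δ t a b : ℝ) : ℝ :=
  (b / t) * (b / a) ^ (δ / 2 - 1) * Real.exp (-(a ^ 2 + b ^ 2) / (2 * t)) *
    ∑' k : ℕ, (a * b / (2 * t)) ^ (2 * (k : ℝ) + δ / 2 - 1) /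
      ((Nat.factorial k : ℝ) * Real.Gamma ((k : ℝ) + δ / 2))

lemma poch_pos {a : ℝ} (ha : 0 < a) (k : ℕ) : 0 < poch a k :=
  Finset.prod_pos fun i _ => by positivity

lemma poch_succ (a : ℝ) (k : ℕ) : poch a (k+1) = poch a k * (a + k) :=
  Finset.prod_range_succ _ _

lemma Gamma_poch {a : ℝ} (ha : 0 < a) (k : ℕ) :
    Real.Gamma (k + a) = poch a k * Real.Gamma a := by
  induction k with
  | zero => simp [poch]
  | succ k ih =>
    have : ((k+1 : ℕ) : ℝ) + a = (k + a) + 1 := by push_cast; ring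
    rw [this, Real.Gamma_add_one (by positivity), ih, poch_succ]; ring

lemma tendsto_inv_add (y : ℝ) : Tendsto (fun k : ℕ => ((k : ℝ) + y)⁻¹) atTop (nhds 0) :=
  tendsto_inv_atTop_zero.comp (tendsto_atTop_add_const_right _ _ tendsto_natCast_atTop_atTop)

lemma tendsto_ratio (x : ℝ) {y : ℝ} (hy : 0 < y) :
    Tendsto (fun k : ℕ => ((k : ℝ) + x) * ((k : ℝ) + y)⁻¹) atTop (nhds 1) := by
  have h := ((tendsto_inv_add y).const_mul (x - y)).const_add 1
  simp only [mul_zero, add_zero] at h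
  refine h.congr fun k => ?_
  have : (k : ℝ) + y ≠ 0 := by positivity
  field_simp
  ring

lemma summable_one {α c y : ℝ} (ha : 0 < α) (hc : 0 < c) (hy : 0 < y) :
    Summable (fun k : ℕ => poch α k / ((Nat.factorial k : ℝ) * poch c k) * y ^ k) := by
  refine summable_of_ratio_test_tendsto_lt_one (l := 0) one_pos ?_ ?_
  · refine Eventually.of_forall fun k => ?_
    have := poch_pos ha k
    have := poch_pos hc k
    positivity
  · have h := ((tendsto_ratio α hc).mul (tendsto_inv_add 1)).mul_const y
    simp only [mul_zero, zero_mul] at h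
    refine h.congr fun k => ?_
    have h1 := poch_pos ha k
    have h2 := poch_pos hc k
    rw [Real.norm_of_nonneg, Real.norm_of_nonneg, poch_succ, poch_succ, Nat.factorial_succ]
    · push_cast
      have : c + (k:ℝ) ≠ 0 := by positivity
      field_simp
      ring
    · positivity
    · have h1 := poch_pos ha (k+1)
      have h2 := poch_pos hc (k+1)
      positivity

lemma summable_two {α c y : ℝ} (ha : 0 < α) (hc : 0 < c) (hy : 0 < y) (hy1 : y < 1) :
    Summable (fun k : ℕ => poch α k * poch α k / ((Nat.factorial k : ℝ) * poch c k) * y ^ k) := by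
  refine summable_of_ratio_test_tendsto_lt_one (l := y) hy1 ?_ ?_
  · refine Eventually.of_forall fun k => ?_
    have := poch_pos ha k
    have := poch_pos hc k
    positivity
  · have h := ((tendsto_ratio α hc).mul (tendsto_ratio α one_pos)).mul_const y
    simp only [mul_one, one_mul] at h
    refine h.congr fun k => ?_
    have h1 := poch_pos ha k
    have h2 := poch_pos hc k
    rw [Real.norm_of_nonneg, Real.norm_of_nonneg, poch_succ, poch_succ, Nat.factorial_succ]
    · push_cast
      have : c + (k:ℝ) ≠ 0 := by positivity
      field_simp
      ring
    · positivity
    · have h1 := poch_pos ha (k+1)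
      have h2 := poch_pos hc (k+1)
      positivity

/-- The Gaussian moment. -/
noncomputable def Mom (δ A : ℝ) (k : ℕ) : ℝ :=
  A ^ (-((k : ℝ) + (δ + 1) / 2)) * (1 / 2) * Real.Gamma (k + (δ + 1) / 2)

lemma integral_mom {δ A : ℝ} (hδ : 0 < δ) (hA : 0 < A) (k : ℕ) :
    ∫ a in Set.Ioi (0:ℝ), a ^ (2 * (k:ℝ) + δ) * Real.exp (-A * a ^ 2) = Mom δ A k := by
  have h := integral_rpow_mul_exp_neg_mul_rpow (p := 2) (q := 2 * (k:ℝ) + δ) (b := A) two_pos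
    (by have : (0:ℝ) ≤ k := by positivity
        linarith) hA
  simp only [Real.rpow_two] at h
  rw [h, Mom]
  congr 2
  · congr 2; ring
  · ring

lemma integrable_mom {δ A : ℝ} (hδ : 0 < δ) (hA : 0 < A) (k : ℕ) :
    IntegrableOn (fun a : ℝ => a ^ (2 * (k:ℝ) + δ) * Real.exp (-A * a ^ 2)) (Set.Ioi 0) :=
  integrableOn_rpow_mul_exp_neg_mul_sq hA
    (by have : (0:ℝ) ≤ k := by positivity
        linarith)

/-- Weights. -/
noncomputable def wgt (δ s r : ℝ) (k : ℕ) : ℝ :=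
  (1 / ((2 : ℝ) ^ (δ / 2 - 1) * s ^ (δ / 2) * Real.Gamma (δ / 2)) * (1 / (r - s)) *
    (1 - r) ^ (-(δ / 2))) * ((2 * (r - s)) ^ (-(2 * (k : ℝ) + δ / 2 - 1)) /
      ((Nat.factorial k : ℝ) * Real.Gamma ((k : ℝ) + δ / 2)))

lemma wgt_pos {δ s r : ℝ} (hδ : 0 < δ) (hs : 0 < s) (hsr : s < r) (hr : r < 1) (k : ℕ) :
    0 < wgt δ s r k := by
  have h1 : 0 < r - s := by linarith
  have h2 : 0 < 1 - r := by linarith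
  have := Real.Gamma_pos_of_pos (s := δ/2) (by positivity)
  have := Real.Gamma_pos_of_pos (s := k + δ/2) (by positivity)
  unfold wgt
  positivity

lemma pointwise {δ s r : ℝ} (hδ : 0 < δ) (hs : 0 < s) (hsr : s < r) (hr : r < 1) {a b : ℝ}
    (ha : 0 < a) (hb : 0 < b) :
    a * b * pFrom0 δ s a * pTrans δ (r - s) a b *
          ((1 - r) ^ (-(δ / 2)) * Real.exp (-b ^ 2 / (2 * (1 - r)))) =
    ∑' k : ℕ, (wgt δ s r k * (b ^ (2 * (k:ℝ) + δ) *
        Real.exp (-((1 - s) / (2 * (r - s) * (1 - r))) * b ^ 2))) *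
        (a ^ (2 * (k:ℝ) + δ) * Real.exp (-(r / (2 * s * (r - s))) * a ^ 2)) := by
  have h1 : 0 < r - s := by linarith
  have h2 : 0 < 1 - r := by linarith
  have hG := Real.Gamma_pos_of_pos (s := δ/2) (by positivity)
  unfold pFrom0 pTrans
  rw [← tsum_mul_left, ← tsum_mul_left, ← tsum_mul_right]
  congr 1
  funext k
  have hGk := Real.Gamma_pos_of_pos (s := k + δ/2) (by positivity)
  have hexp : Real.exp (-a ^ 2 / (2 * s)) * Real.exp (-(a ^ 2 + b ^ 2) / (2 * (r - s))) *
      Real.exp (-b ^ 2 / (2 * (1 - r))) =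
      Real.exp (-((1 - s) / (2 * (r - s) * (1 - r))) * b ^ 2) *
        Real.exp (-(r / (2 * s * (r - s))) * a ^ 2) := by
    rw [← Real.exp_add, ← Real.exp_add, ← Real.exp_add]
    congr 1
    field_simp
    ring
  have hpa : a * a ^ (δ - 1) * (b * b) * (b / a) ^ (δ / 2 - 1) *
      (a * b / (2 * (r - s))) ^ (2 * (k : ℝ) + δ / 2 - 1) =
      a ^ (2 * (k:ℝ) + δ) * b ^ (2 * (k:ℝ) + δ) *
        (2 * (r - s)) ^ (-(2 * (k : ℝ) + δ / 2 - 1)) := by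
    have e1 : a ^ (2 * (k:ℝ) + δ) =
        a * a ^ (δ - 1) * (a ^ (δ / 2 - 1))⁻¹ * a ^ (2 * (k : ℝ) + δ / 2 - 1) := by
      rw [← Real.rpow_neg ha.le]
      nth_rw 2 [← Real.rpow_one a]
      rw [← Real.rpow_add ha, ← Real.rpow_add ha, ← Real.rpow_add ha]
      congr 1; ring
    have e2 : b ^ (2 * (k:ℝ) + δ) =
        (b * b) * b ^ (δ / 2 - 1) * b ^ (2 * (k : ℝ) + δ / 2 - 1) := by
      nth_rw 2 3 [← Real.rpow_one b]
      rw [← Real.rpow_add hb, ← Real.rpow_add hb, ← Real.rpow_add hb]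
      congr 1; ring
    rw [e1, e2, Real.rpow_neg (by positivity), Real.div_rpow hb.le ha.le,
      Real.div_rpow (by positivity) (by positivity), Real.mul_rpow ha.le hb.le]
    ring
  unfold wgt
  calc _ = (1 / ((2 : ℝ) ^ (δ / 2 - 1) * s ^ (δ / 2) * Real.Gamma (δ / 2)) * (1 / (r - s)) *
    (1 - r) ^ (-(δ / 2))) * (1 / ((Nat.factorial k : ℝ) * Real.Gamma ((k : ℝ) + δ / 2))) *
    (a * a ^ (δ - 1) * (b * b) * (b / a) ^ (δ / 2 - 1) *
      (a * b / (2 * (r - s))) ^ (2 * (k : ℝ) + δ / 2 - 1)) *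
      (Real.exp (-a ^ 2 / (2 * s)) * Real.exp (-(a ^ 2 + b ^ 2) / (2 * (r - s))) *
      Real.exp (-b ^ 2 / (2 * (1 - r)))) := by ring
    _ = _ := by rw [hexp, hpa]; ring

lemma term_eq {δ s r : ℝ} (hδ : 0 < δ) (hs : 0 < s) (hsr : s < r) (hr : r < 1) (k : ℕ) :
    wgt δ s r k * Mom δ (r / (2 * s * (r - s))) k * Mom δ ((1 - s) / (2 * (r - s) * (1 - r))) k =
    2 * (Real.Gamma ((δ + 1) / 2) ^ 2 / Real.Gamma (δ / 2) ^ 2) *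
        (r - s) ^ (δ / 2 + 1) * (s * (1 - r)) ^ ((1 : ℝ) / 2) *
        (r * (1 - s)) ^ (-((δ + 1) / 2)) *
        ((poch ((δ + 1) / 2) k * poch ((δ + 1) / 2) k) /
          ((Nat.factorial k : ℝ) * poch (δ / 2) k) * (s * (1 - r) / (r * (1 - s))) ^ k) := by
  have h1 : 0 < r - s := by linarith
  have h2 : 0 < 1 - r := by linarith
  have h3 : 0 < 1 - s := by linarith
  have h4 : 0 < r := by linarith
  have hG := Real.Gamma_pos_of_pos (s := δ/2) (by positivity)
  have hp := poch_pos (a := δ/2) (by positivity) k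
  unfold wgt Mom
  rw [Gamma_poch (by positivity), Gamma_poch (by positivity)]
  have key : (r / (2 * s * (r - s))) ^ (-((k : ℝ) + (δ + 1) / 2)) *
      ((1 - s) / (2 * (r - s) * (1 - r))) ^ (-((k : ℝ) + (δ + 1) / 2)) =
      (2 * (r - s)) ^ (2 * ((k : ℝ) + (δ + 1) / 2)) *
        ((s * (1 - r)) ^ ((δ + 1) / 2) * (r * (1 - s)) ^ (-((δ + 1) / 2))) *
        (s * (1 - r) / (r * (1 - s))) ^ k := by
    rw [← Real.mul_rpow (by positivity) (by positivity),
      Real.rpow_neg (by positivity), ← Real.inv_rpow (by positivity),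
      Real.rpow_neg (by positivity), ← div_eq_mul_inv,
      ← Real.div_rpow (by positivity) (by positivity), Real.rpow_mul (by positivity),
      ← Real.rpow_natCast _ k, mul_assoc (_ ^ _), ← Real.rpow_add (by positivity),
      add_comm ((δ + 1) / 2), ← Real.mul_rpow (by positivity) (by positivity)]
    congr 1
    rw [Real.rpow_two]
    field_simp
    try ring
  have e1 : (s * (1 - r)) ^ ((δ + 1) / 2) * s ^ (-(δ / 2)) * (1 - r) ^ (-(δ/2)) =
      (s * (1 - r)) ^ ((1:ℝ) / 2) := by
    rw [mul_assoc, ← Real.mul_rpow hs.le h2.le, ← Real.rpow_add (by positivity)]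
    congr 1; ring
  have e2 : (2 : ℝ) ^ (-(δ / 2 - 1)) * (1 / (r - s)) * (2 * (r - s)) ^ (-(2 * (k : ℝ) + δ / 2 - 1)) *
      (2 * (r - s)) ^ (2 * ((k : ℝ) + (δ + 1) / 2)) * (1 / 4) = 2 * (r - s) ^ (δ / 2 + 1) := by
    have : (2 * (r - s)) ^ (-(2 * (k : ℝ) + δ / 2 - 1)) *
      (2 * (r - s)) ^ (2 * ((k : ℝ) + (δ + 1) / 2)) =
      2 ^ (δ / 2 - 1) * 8 * ((r - s) ^ (δ / 2 + 1) * (r - s)) := by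
      rw [← Real.rpow_add (by positivity)]
      have : -(2 * (k : ℝ) + δ / 2 - 1) + 2 * ((k : ℝ) + (δ + 1) / 2) = δ/2 + 1 + 1 := by ring
      rw [this, Real.mul_rpow (by positivity) (by positivity), Real.rpow_add_one h1.ne']
      congr 1
      have : δ/2 + 1 + 1 = (δ / 2 - 1) + (3 : ℕ) := by push_cast; ring
      rw [this, Real.rpow_add_natCast (by positivity)]
      norm_num
    rw [mul_assoc ((2 : ℝ) ^ (-(δ / 2 - 1)) * (1 / (r - s))), this, Real.rpow_neg (by positivity)]
    have : (2:ℝ) ^ (δ / 2 - 1) ≠ 0 := by positivity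
    field_simp
    try norm_num
  calc _ = ((r / (2 * s * (r - s))) ^ (-((k : ℝ) + (δ + 1) / 2)) *
      ((1 - s) / (2 * (r - s) * (1 - r))) ^ (-((k : ℝ) + (δ + 1) / 2))) *
      ((1 / ((2 : ℝ) ^ (δ / 2 - 1) * s ^ (δ / 2) * Real.Gamma (δ / 2)) * (1 / (r - s)) *
    (1 - r) ^ (-(δ / 2))) * ((2 * (r - s)) ^ (-(2 * (k : ℝ) + δ / 2 - 1)) /
      ((Nat.factorial k : ℝ) * (poch (δ/2) k * Real.Gamma (δ / 2)))) * (1 / 4) *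
      (poch ((δ + 1) / 2) k * Real.Gamma ((δ + 1) / 2)) ^ 2) := by ring
    _ = (2 * (r - s) ^ (δ / 2 + 1)) * (s * (1 - r)) ^ ((1 : ℝ) / 2) *
        ((Real.Gamma ((δ + 1) / 2) ^ 2 / Real.Gamma (δ / 2) ^ 2) *
        (r * (1 - s)) ^ (-((δ + 1) / 2)) *
        ((poch ((δ + 1) / 2) k * poch ((δ + 1) / 2) k) /
          ((Nat.factorial k : ℝ) * poch (δ / 2) k) * (s * (1 - r) / (r * (1 - s))) ^ k)) := by
      rw [← e1, ← e2, key, Real.rpow_neg (x := 2) (by positivity), Real.rpow_neg (x := s) hs.le]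
      ring
    _ = _ := by ring

lemma summable_inner {δ s r b : ℝ} (hδ : 0 < δ) (hs : 0 < s) (hsr : s < r) (hr : r < 1)
    (hb : 0 < b) (E : ℝ) :
    Summable fun k : ℕ => wgt δ s r k * (b ^ (2 * (k:ℝ) + δ) * E) *
      Mom δ (r / (2 * s * (r - s))) k := by
  have h1 : 0 < r - s := by linarith
  have h2 : 0 < 1 - r := by linarith
  have h4 : 0 < r := by linarith
  have hG := Real.Gamma_pos_of_pos (s := δ/2) (by positivity)
  have hS := (summable_one (α := (δ+1)/2) (c := δ/2)
    (y := ((2 * (r - s)) ^ 2)⁻¹ * b ^ 2 * (r / (2 * s * (r - s)))⁻¹)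
    (by positivity) (by positivity) (by positivity)).mul_left
    ((1 / ((2 : ℝ) ^ (δ / 2 - 1) * s ^ (δ / 2) * Real.Gamma (δ / 2)) * (1 / (r - s)) *
    (1 - r) ^ (-(δ / 2))) * (2 * (r - s)) ^ (-(δ / 2 - 1)) / Real.Gamma (δ/2) * b ^ δ * E *
    (r / (2 * s * (r - s))) ^ (-((δ + 1)/2)) * (1 / 2) * Real.Gamma ((δ + 1)/2))
  refine hS.congr fun k => ?_
  unfold wgt Mom
  rw [Gamma_poch (by positivity), Gamma_poch (by positivity)]
  have hp := poch_pos (a := δ/2) (by positivity) k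
  have e1 : (2 * (r - s)) ^ (-(2 * (k : ℝ) + δ / 2 - 1)) =
      (2 * (r - s)) ^ (-(δ / 2 - 1)) * (((2 * (r - s)) ^ 2)⁻¹) ^ k := by
    have : -(2 * (k : ℝ) + δ / 2 - 1) = -(δ / 2 - 1) + -((2 * k : ℕ) : ℝ) := by push_cast; ring
    rw [this, Real.rpow_add (by positivity), Real.rpow_neg (y := ((2 * k : ℕ) : ℝ)) (by positivity),
      Real.rpow_natCast, inv_pow, pow_mul]
  have e2 : b ^ (2 * (k:ℝ) + δ) = b ^ δ * (b ^ 2) ^ k := by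
    have : 2 * (k:ℝ) + δ = δ + ((2 * k : ℕ) : ℝ) := by push_cast; ring
    rw [this, Real.rpow_add_natCast hb.ne', pow_mul]
  have e3 : (r / (2 * s * (r - s))) ^ (-((k : ℝ) + (δ + 1) / 2)) =
      (r / (2 * s * (r - s))) ^ (-((δ + 1)/2)) * ((r / (2 * s * (r - s)))⁻¹) ^ k := by
    rw [neg_add, add_comm, Real.rpow_add (by positivity),
      Real.rpow_neg (y := (k : ℝ)) (by positivity), Real.rpow_natCast, inv_pow]
  rw [e1, e2, e3, mul_pow, mul_pow]
  have hne : Real.Gamma (δ/2) ≠ 0 := hG.ne'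
  ring

lemma Mom_pos {δ A : ℝ} (hδ : 0 < δ) (hA : 0 < A) (k : ℕ) : 0 < Mom δ A k := by
  have := Real.Gamma_pos_of_pos (s := k + (δ+1)/2) (by positivity)
  unfold Mom
  positivity

theorem bessel_bridge_second_moment (δ : ℝ) (hδ : 0 < δ) (s r : ℝ)
    (hs : 0 < s) (hsr : s < r) (hr : r < 1) :
    (∫ b in Set.Ioi (0 : ℝ), ∫ a in Set.Ioi (0 : ℝ),
        a * b * pFrom0 δ s a * pTrans δ (r - s) a b *
          ((1 - r) ^ (-(δ / 2)) * Real.exp (-b ^ 2 / (2 * (1 - r)))))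
    = 2 * (Real.Gamma ((δ + 1) / 2) ^ 2 / Real.Gamma (δ / 2) ^ 2) *
        (r - s) ^ (δ / 2 + 1) * (s * (1 - r)) ^ ((1 : ℝ) / 2) *
        (r * (1 - s)) ^ (-((δ + 1) / 2)) *
        hyp2F1 ((δ + 1) / 2) ((δ + 1) / 2) (δ / 2) (s * (1 - r) / (r * (1 - s))) := by
  have h1 : 0 < r - s := by linarith
  have h2 : 0 < 1 - r := by linarith
  have h3 : 0 < 1 - s := by linarith
  have h4 : 0 < r := by linarith
  have hA : 0 < r / (2 * s * (r - s)) := by positivity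
  have hB : 0 < (1 - s) / (2 * (r - s) * (1 - r)) := by positivity
  have hz : s * (1 - r) / (r * (1 - s)) < 1 := by
    rw [div_lt_one (by positivity)]; nlinarith
  have hsum := (summable_two (α := (δ+1)/2) (c := δ/2) (y := s * (1 - r) / (r * (1 - s)))
    (by positivity) (by positivity) (by positivity) hz).mul_left
    (2 * (Real.Gamma ((δ + 1) / 2) ^ 2 / Real.Gamma (δ / 2) ^ 2) *
        (r - s) ^ (δ / 2 + 1) * (s * (1 - r)) ^ ((1 : ℝ) / 2) *
        (r * (1 - s)) ^ (-((δ + 1) / 2)))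
  rw [hyp2F1, ← tsum_mul_left]
  simp only [← term_eq hδ hs hsr hr] at hsum ⊢
  -- inner integral
  have inner : ∀ b ∈ Set.Ioi (0:ℝ), (∫ a in Set.Ioi (0 : ℝ),
        a * b * pFrom0 δ s a * pTrans δ (r - s) a b *
          ((1 - r) ^ (-(δ / 2)) * Real.exp (-b ^ 2 / (2 * (1 - r))))) =
      ∑' k : ℕ, wgt δ s r k * Mom δ (r / (2 * s * (r - s))) k * (b ^ (2 * (k:ℝ) + δ) *
        Real.exp (-((1 - s) / (2 * (r - s) * (1 - r))) * b ^ 2)) := by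
    intro b hb
    have hb' : 0 < b := hb
    rw [setIntegral_congr_fun measurableSet_Ioi
      (fun a ha => pointwise hδ hs hsr hr (Set.mem_Ioi.1 ha) hb')]
    have hI : ∀ k : ℕ, ∫ a in Set.Ioi (0:ℝ), (wgt δ s r k * (b ^ (2 * (k:ℝ) + δ) *
        Real.exp (-((1 - s) / (2 * (r - s) * (1 - r))) * b ^ 2))) *
        (a ^ (2 * (k:ℝ) + δ) * Real.exp (-(r / (2 * s * (r - s))) * a ^ 2)) =
        wgt δ s r k * (b ^ (2 * (k:ℝ) + δ) *
        Real.exp (-((1 - s) / (2 * (r - s) * (1 - r))) * b ^ 2)) *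
          Mom δ (r / (2 * s * (r - s))) k := fun k => by
      rw [integral_const_mul, integral_mom hδ hA]
    rw [← (hasSum_integral_of_summable_integral_norm
      (fun k => (integrable_mom hδ hA k).const_mul _) ?_).tsum_eq]
    · refine tsum_congr fun k => ?_
      rw [hI]; ring
    · refine (summable_inner hδ hs hsr hr hb'
        (Real.exp (-((1 - s) / (2 * (r - s) * (1 - r))) * b ^ 2))).congr fun k => ?_
      rw [← hI k]
      refine setIntegral_congr_fun measurableSet_Ioi fun a ha => ?_
      have ha' : 0 < a := ha
      have := wgt_pos hδ hs hsr hr k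
      exact (Real.norm_of_nonneg (by positivity)).symm
  rw [setIntegral_congr_fun measurableSet_Ioi inner]
  have hI : ∀ k : ℕ, ∫ b in Set.Ioi (0:ℝ), wgt δ s r k * Mom δ (r / (2 * s * (r - s))) k *
      (b ^ (2 * (k:ℝ) + δ) * Real.exp (-((1 - s) / (2 * (r - s) * (1 - r))) * b ^ 2)) =
      wgt δ s r k * Mom δ (r / (2 * s * (r - s))) k *
        Mom δ ((1 - s) / (2 * (r - s) * (1 - r))) k := fun k => by
    rw [integral_const_mul, integral_mom hδ hB]
  rw [← (hasSum_integral_of_summable_integral_norm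
      (fun k => (integrable_mom hδ hB k).const_mul _) ?_).tsum_eq]
  · exact tsum_congr hI
  · refine hsum.congr fun k => ?_
    rw [← hI k]
    refine setIntegral_congr_fun measurableSet_Ioi fun b hb => ?_
    have hb' : 0 < b := hb
    have := wgt_pos hδ hs hsr hr k
    have := Mom_pos hδ hA k
    exact (Real.norm_of_nonneg (by positivity)).symm
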